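/- Let β > 0 and let m ≥ 1 be an integer. There exists K > 0 depending only on m and β such that for all integers n ≥ 1, the expected number of degenerate pairs of adjacent half-edges of G^n_{m,β} satisfies 0 ≤ E[Σ_{i=1}^{n} binom(d(u_i), 2) − Σ_{1≤a<b<c≤n} (m(a,b)·m(a,c) + m(a,b)·m(b,c) + m(a,c)·m(b,c))] ≤ K · n^{1/(2+β)}. -/

import Mathlib

open Finset

/-- A parent sequence of length `N`: for each `t ∈ {2,…,N}` an index `f t ∈ {1,…,t-1}`. -/
def ParentSeq (N : ℕ) : Type :=
  ∀ t : Set.Icc 2 N, Set.Icc 1 ((t : ℕ) - 1)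

noncomputable instance (N : ℕ) : Fintype (ParentSeq N) := by
  unfold ParentSeq
  classical
  infer_instance

/-- The value of a parent sequence at `j` (junk value `0` outside `{2,…,N}`). -/
def pval {N : ℕ} (f : ParentSeq N) (j : ℕ) : ℕ :=
  if h : 2 ≤ j ∧ j ≤ N then (f ⟨j, Set.mem_Icc.mpr h⟩ : ℕ) else 0

/-- The degree `d_t(v_i)` of vertex `i` at time `t` in the tree determined by `f`. -/
def deg {N : ℕ} (f : ParentSeq N) (t i : ℕ) : ℕ :=
  ((Finset.Icc 2 t).filter (fun j => pval f j = i)).card + (if 2 ≤ i then 1 else 0)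

/-- The Móri probability of the parent sequence `f`. -/
noncomputable def moriP {N : ℕ} (β : ℝ) (f : ParentSeq N) : ℝ :=
  ∏ t ∈ Finset.Icc 2 N, ((deg f (t - 1) (pval f t) : ℝ) + β) / ((2 + β) * ((t : ℝ) - 1) - 2)

/-- Expectation of `X` under the Móri measure on parent sequences of length `N`. -/
noncomputable def moriE (N : ℕ) (β : ℝ) (X : ParentSeq N → ℝ) : ℝ :=
  ∑ f : ParentSeq N, moriP β f * X f

open Classical in
/-- Probability of an event under the Móri measure on parent sequences of length `N`. -/
noncomputable def moriPr (N : ℕ) (β : ℝ) (p : ParentSeq N → Prop) : ℝ :=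
  ∑ f : ParentSeq N, if p f then moriP β f else 0

/-- The index of the merged vertex containing tree vertex `t` when merging in blocks of `m`. -/
def blk (m t : ℕ) : ℕ := (t - 1) / m + 1

/-- The number `m(a,b)` of edges joining `u_a` and `u_b` in the Móri graph `G^n_{m,β}`. -/
def mult (n m : ℕ) (f : ParentSeq (n * m)) (a b : ℕ) : ℕ :=
  ((Finset.Icc 2 (n * m)).filter (fun t =>
    (blk m t = a ∧ blk m (pval f t) = b) ∨ (blk m t = b ∧ blk m (pval f t) = a))).card

/-- The degree `d(u_i)` of the merged vertex `u_i` in the Móri graph `G^n_{m,β}`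
(a loop contributes `2`). -/
def degU (n m : ℕ) (f : ParentSeq (n * m)) (i : ℕ) : ℕ :=
  ((Finset.Icc 2 (n * m)).filter (fun t => blk m t = i)).card +
  ((Finset.Icc 2 (n * m)).filter (fun t => blk m (pval f t) = i)).card

/-!
A block of total weight `w` receives the next edge with probability about `w / D`, where
`D = (2 + β) t - 2` is the total weight of the tree on `t` vertices. The degenerate pairs are
controlled by a potential `Φ`: the sum over the loops of the weight of their block, plus the number
of pairs of parallel edges. Each loop at a block of weight `w` gains `w / D` on average. The edge of
a new vertex becomes parallel to one of the at most `m - 1` previous edges leaving the same block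
with probability about `w' / D`, where `w'` is the weight of the target of the previous edge. As
this target was chosen with probability proportional to its weight, the expectation of `w'` is
`1 / D` times a second moment of the weights, which is bounded because `∑ w (w + 1)` is multiplied
on average by `1 + 2 / D`, up to a bounded term, and hence grows linearly in `t`. Therefore
`E Φ_{t+1} ≤ (1 + 1 / D) E Φ_t + O(1 / D)`, which gives `E Φ_t = O(t ^ (1 / (2 + β)))`.
-/

/-! ### Pairs and cherries -/

section Pairs

variable {ι : Type*} [LinearOrder ι]

lemma choose_two_add (a b : ℕ) : (a + b).choose 2 = a.choose 2 + b.choose 2 + a * b := by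
  induction b with
  | zero => simp
  | succ b ih =>
    rw [← add_assoc, Nat.choose_succ_succ', ih, Nat.choose_succ_succ' b, Nat.choose_one_right,
      Nat.choose_one_right]
    ring

lemma choose_two_sum (s : Finset ι) (x : ι → ℕ) :
    (∑ i ∈ s, x i).choose 2 =
      ∑ i ∈ s, (x i).choose 2 + ∑ j ∈ s, ∑ i ∈ s with i < j, x i * x j := by
  induction s using Finset.induction_on_max with
  | empty => simp
  | insert a s ha ih =>
    have hmem : a ∉ s := fun h => (ha a h).false
    have hlast : {i ∈ insert a s | i < a} = s := by grind
    have hinit : ∀ j ∈ s, {i ∈ insert a s | i < j} = {i ∈ s | i < j} := by grind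
    have hsum : ∑ j ∈ s, ∑ i ∈ insert a s with i < j, x i * x j =
        ∑ j ∈ s, ∑ i ∈ s with i < j, x i * x j := sum_congr rfl fun j hj => by rw [hinit j hj]
    rw [sum_insert hmem, sum_insert hmem, sum_insert hmem, hlast, hsum, choose_two_add, ih,
      ← sum_mul]
    ring

lemma choose_two_card_filter (s : Finset ι) (p : ι → Prop) [DecidablePred p] :
    (#{i ∈ s | p i}).choose 2 =
      ∑ j ∈ s, ∑ i ∈ s with i < j, (if p i then 1 else 0) * (if p j then 1 else 0) := by
  have hchoose : ∀ i, (if p i then 1 else 0 : ℕ).choose 2 = 0 := fun i => by split_ifs <;> rfl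
  rw [card_filter, choose_two_sum, sum_eq_zero fun i _ => hchoose i, zero_add]

lemma sum_choose_two_card_fiber {κ : Type*} [DecidableEq κ] {s : Finset ι} {T : Finset κ}
    {φ : ι → κ} (hφ : Set.MapsTo φ s T) :
    ∑ k ∈ T, (#{i ∈ s | φ i = k}).choose 2 =
      ∑ j ∈ s, ∑ i ∈ s with i < j, if φ i = φ j then 1 else 0 := by
  simp only [choose_two_card_filter]
  rw [sum_comm]
  refine sum_congr rfl fun j hj => sum_comm.trans (sum_congr rfl fun i _ => ?_)
  simp only [mul_ite, mul_one, mul_zero, sum_ite_eq, show φ j ∈ T from hφ hj, if_true]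

lemma sum_cherries_eq {R : Type*} [CommSemiring R] (s : Finset ι) {μ : ι → ι → R}
    (hμ : ∀ a b, μ a b = μ b a) :
    ∑ v ∈ s, ∑ w ∈ s.erase v, ∑ u ∈ s.erase v with u < w, μ v u * μ v w =
      ∑ a ∈ s, ∑ b ∈ s with a < b, ∑ c ∈ s with b < c,
        (μ a b * μ a c + μ a b * μ b c + μ a c * μ b c) := by
  -- Each cherry `u – v – w` with `u < w` is sorted by the position of its centre `v`.
  have position (v w u : ι) :
      (if w ≠ v ∧ u ≠ v ∧ u < w then μ v u * μ v w else 0) =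
      (if v < u ∧ u < w then μ v u * μ v w else 0) +
      (if u < v ∧ v < w then μ u v * μ v w else 0) +
      (if u < w ∧ w < v then μ u v * μ w v else 0) := by
    rw [hμ u v, hμ w v]
    split_ifs <;> grind
  simp only [← filter_ne', sum_filter, ite_sum_zero, ← ite_and, position, sum_add_distrib]
  refine congr_arg₂ (· + ·) (congr_arg₂ (· + ·) ?_ ?_) ?_
  · exact sum_congr rfl fun a _ => sum_comm
  · exact (sum_congr rfl fun b _ => sum_comm).trans sum_comm
  · rw [sum_comm]
    exact (sum_congr rfl fun b _ => sum_comm).trans sum_comm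

lemma sum_choose_two_degree_eq (s : Finset ι) {μ : ι → ι → ℕ} (hμ : ∀ a b, μ a b = μ b a) :
    ∑ v ∈ s, (∑ u ∈ s.erase v, μ v u + 2 * μ v v).choose 2 =
      ∑ a ∈ s, ∑ b ∈ s with a < b, ∑ c ∈ s with b < c,
        (μ a b * μ a c + μ a b * μ b c + μ a c * μ b c) +
      ∑ v ∈ s, (∑ u ∈ s.erase v, (μ v u).choose 2 +
        2 * μ v v * ∑ u ∈ s.erase v, μ v u + (2 * μ v v).choose 2) := by
  rw [← sum_cherries_eq s hμ, ← sum_add_distrib]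
  refine sum_congr rfl fun v _ => ?_
  rw [choose_two_add, choose_two_sum]
  ring

end Pairs

/-! ### The Móri process -/

section ParentSequences

variable {N : ℕ}

/-- `g` is the parent function of a tree on `v₁, …, v_N`; its values outside `{2, …, N}` are
irrelevant. Working with functions on `ℕ` keeps the type fixed while the tree grows. -/
def IsParentFun (N : ℕ) (g : ℕ → ℕ) : Prop := ∀ j ∈ Icc 2 N, g j ∈ Ico 1 j

lemma pval_coe (f : ParentSeq N) (t : Set.Icc 2 N) : pval f t = f t :=
  dif_pos (Set.mem_Icc.1 t.2)

lemma isParentFun_pval (f : ParentSeq N) : IsParentFun N (pval f) := fun j hj => by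
  have hf := (f ⟨j, mem_Icc.1 hj⟩).2
  rw [← pval_coe, Set.mem_Icc] at hf
  rw [mem_Ico]
  grind

lemma pval_of_notMem (f : ParentSeq N) {j : ℕ} (hj : j ∉ Icc 2 N) : pval f j = 0 :=
  dif_neg (by rwa [mem_Icc] at hj)

lemma pval_injective : Function.Injective (pval : ParentSeq N → ℕ → ℕ) := fun f f' h =>
  funext fun t => Subtype.ext <| by rw [← pval_coe, ← pval_coe, h]

lemma IsParentFun.mono {M : ℕ} {g : ℕ → ℕ} (hg : IsParentFun N g) (h : M ≤ N) :
    IsParentFun M g := fun j hj => hg j (Icc_subset_Icc_right h hj)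

lemma IsParentFun.update {g : ℕ → ℕ} (hg : IsParentFun N g) {i : ℕ} (hi : i ∈ Icc 1 N) :
    IsParentFun (N + 1) (Function.update g (N + 1) i) := by
  intro j hj
  rcases eq_or_ne j (N + 1) with rfl | hne
  · rw [Function.update_self]
    grind
  · rw [Function.update_of_ne hne]
    exact hg j (by grind)

/-- The parent sequence with a given parent function. -/
def IsParentFun.toParentSeq {g : ℕ → ℕ} (hg : IsParentFun N g) : ParentSeq N := fun t =>
  ⟨g t, by
    have := hg t (mem_Icc.2 t.2)
    grind⟩

lemma IsParentFun.pval_toParentSeq {g : ℕ → ℕ} (hg : IsParentFun N g) {j : ℕ}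
    (hj : j ∈ Icc 2 N) : pval hg.toParentSeq j = g j :=
  dif_pos (mem_Icc.1 hj)

/-- The parent sequence in which `v_{N+1}` is attached to `v_i`. -/
def ParentSeq.snoc (f : ParentSeq N) (i : Icc 1 N) : ParentSeq (N + 1) :=
  ((isParentFun_pval f).update i.2).toParentSeq

lemma ParentSeq.pval_snoc (f : ParentSeq N) (i : Icc 1 N) :
    pval (f.snoc i) = Function.update (pval f) (N + 1) i := by
  funext j
  by_cases hj : j ∈ Icc 2 (N + 1)
  · exact IsParentFun.pval_toParentSeq _ hj
  · have := mem_Icc.1 i.2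
    rw [pval_of_notMem _ hj, Function.update_of_ne (by grind), pval_of_notMem _ (by grind)]

lemma ParentSeq.snoc_injective :
    Function.Injective fun p : ParentSeq N × Icc 1 N => p.1.snoc p.2 := by
  rintro ⟨f, i⟩ ⟨f', i'⟩ h
  have h := congrArg pval h
  simp only [pval_snoc] at h
  have hi : i = i' := Subtype.ext (by simpa using congrFun h (N + 1))
  have hf : f = f' := pval_injective <| funext fun j => by
    rcases eq_or_ne j (N + 1) with rfl | hj
    · rw [pval_of_notMem _ (by simp), pval_of_notMem _ (by simp)]
    · simpa [hj] using congrFun h j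
  rw [hf, hi]

lemma ParentSeq.snoc_surjective (hN : 1 ≤ N) :
    Function.Surjective fun p : ParentSeq N × Icc 1 N => p.1.snoc p.2 := fun f => by
  have hf := isParentFun_pval f
  have hlast : pval f (N + 1) ∈ Icc 1 N := by
    have := hf (N + 1) (by grind)
    grind
  refine ⟨((hf.mono N.le_succ).toParentSeq, ⟨_, hlast⟩), pval_injective <| funext fun j => ?_⟩
  rw [pval_snoc]
  rcases eq_or_ne j (N + 1) with rfl | hj
  · rw [Function.update_self]
  · rw [Function.update_of_ne hj]
    by_cases hjN : j ∈ Icc 2 N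
    · rw [IsParentFun.pval_toParentSeq _ hjN]
    · rw [pval_of_notMem _ hjN, pval_of_notMem _ (by grind)]

/-- A parent sequence of length `N + 1` is one of length `N` followed by the parent of
`v_{N+1}`. -/
noncomputable def ParentSeq.snocEquiv (hN : 1 ≤ N) : ParentSeq N × Icc 1 N ≃ ParentSeq (N + 1) :=
  Equiv.ofBijective _ ⟨snoc_injective, snoc_surjective hN⟩

noncomputable instance : Unique (ParentSeq 1) where
  default := IsParentFun.toParentSeq (g := id) fun j hj => by grind
  uniq f := pval_injective <| funext fun j => by
    rw [pval_of_notMem f (by grind), pval_of_notMem _ (by grind)]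

end ParentSequences

section Attachment

variable {N t : ℕ} {β : ℝ}

/-- The degree `d_t(v_i)` for the parent function `g`. -/
def treeDeg (g : ℕ → ℕ) (t i : ℕ) : ℕ := #{j ∈ Icc 2 t | g j = i} + if 2 ≤ i then 1 else 0

/-- The sum over `i ∈ {1, …, t}` of `d_t(v_i) + β`, see `sum_attachProb`. -/
def totalWeight (β : ℝ) (t : ℕ) : ℝ := (2 + β) * t - 2

/-- The conditional probability that `v_{t+1}` attaches to `v_i`, given the first `t` vertices. -/
noncomputable def attachProb (β : ℝ) (g : ℕ → ℕ) (t i : ℕ) : ℝ :=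
  (treeDeg g t i + β) / totalWeight β t

/-- The conditional expectation of `F i`, where `v_i` is the parent of `v_{t+1}`, given the first
`t` vertices. -/
noncomputable def attachE (β : ℝ) (g : ℕ → ℕ) (t : ℕ) (F : ℕ → ℝ) : ℝ :=
  ∑ i ∈ Icc 1 t, attachProb β g t i * F i

lemma le_totalWeight (β : ℝ) (ht : 1 ≤ t) : β * t ≤ totalWeight β t := by
  have ht : (1 : ℝ) ≤ t := Nat.one_le_cast.2 ht
  unfold totalWeight
  linarith

lemma totalWeight_pos (hβ : 0 < β) (ht : 1 ≤ t) : 0 < totalWeight β t :=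
  (mul_pos hβ (Nat.cast_pos.2 ht)).trans_le (le_totalWeight β ht)

lemma attachProb_nonneg (hβ : 0 < β) (ht : 1 ≤ t) (g : ℕ → ℕ) (i : ℕ) :
    0 ≤ attachProb β g t i :=
  div_nonneg (by positivity) (totalWeight_pos hβ ht).le

lemma sum_treeDeg {g : ℕ → ℕ} (hg : IsParentFun t g) :
    ∑ i ∈ Icc 1 t, treeDeg g t i = 2 * (t - 1) := by
  have hparent : Set.MapsTo g (Icc 2 t) (Icc 1 t) := fun j hj => by
    have := hg j hj
    grind
  have hchild : {i ∈ Icc 1 t | 2 ≤ i} = Icc 2 t := by grind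
  simp only [treeDeg, sum_add_distrib, ← card_eq_sum_card_fiberwise hparent, ← card_filter, hchild,
    Nat.card_Icc]
  lia

lemma sum_attachProb (hβ : 0 < β) (ht : 1 ≤ t) {g : ℕ → ℕ} (hg : IsParentFun t g) :
    ∑ i ∈ Icc 1 t, attachProb β g t i = 1 := by
  simp only [attachProb]
  rw [← sum_div, div_eq_one_iff_eq (totalWeight_pos hβ ht).ne', sum_add_distrib, ← Nat.cast_sum,
    sum_treeDeg hg, sum_const, Nat.card_Icc, totalWeight, nsmul_eq_mul]
  push_cast [ht]
  ring

lemma attachE_add (g : ℕ → ℕ) (t : ℕ) (F G : ℕ → ℝ) :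
    attachE β g t (fun i => F i + G i) = attachE β g t F + attachE β g t G := by
  simp only [attachE, mul_add, sum_add_distrib]

lemma attachE_const_mul (g : ℕ → ℕ) (t : ℕ) (c : ℝ) (F : ℕ → ℝ) :
    attachE β g t (fun i => c * F i) = c * attachE β g t F := by
  simp only [attachE, mul_sum, mul_left_comm]

lemma attachE_sum {κ : Type*} (g : ℕ → ℕ) (t : ℕ) (s : Finset κ) (F : κ → ℕ → ℝ) :
    attachE β g t (fun i => ∑ k ∈ s, F k i) = ∑ k ∈ s, attachE β g t (F k) := by
  simp only [attachE, mul_sum]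
  exact sum_comm

lemma attachE_const (hβ : 0 < β) (ht : 1 ≤ t) {g : ℕ → ℕ} (hg : IsParentFun t g) (c : ℝ) :
    attachE β g t (fun _ => c) = c := by
  rw [attachE, ← sum_mul, sum_attachProb hβ ht hg, one_mul]

lemma attachE_mono (hβ : 0 < β) (ht : 1 ≤ t) (g : ℕ → ℕ) {F G : ℕ → ℝ}
    (h : ∀ i ∈ Icc 1 t, F i ≤ G i) : attachE β g t F ≤ attachE β g t G :=
  sum_le_sum fun i hi => mul_le_mul_of_nonneg_left (h i hi) (attachProb_nonneg hβ ht g i)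

lemma apply_update_of_dependsOn {γ δ : Type*} {X : (ℕ → γ) → δ} {s : Set ℕ} (hX : DependsOn X s)
    {k : ℕ} (hk : k ∉ s) (g : ℕ → γ) (i : γ) : X (Function.update g k i) = X g :=
  hX fun _ hj => Function.update_of_ne (ne_of_mem_of_not_mem hj hk) _ _

lemma dependsOn_attachProb (β : ℝ) (t i : ℕ) :
    DependsOn (fun g => attachProb β g t i) (Set.Iic t) := fun g g' h => by
  simp only [attachProb, treeDeg]
  rw [filter_congr fun j hj => by rw [h j (mem_Icc.1 hj).2]]

lemma moriP_eq_prod_attachProb (β : ℝ) (f : ParentSeq N) :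
    moriP β f = ∏ t ∈ Icc 2 N, attachProb β (pval f) (t - 1) (pval f t) := by
  refine prod_congr rfl fun t ht => ?_
  rw [attachProb, totalWeight, Nat.cast_pred (by grind)]
  rfl

lemma moriP_nonneg (hβ : 0 < β) (f : ParentSeq N) : 0 ≤ moriP β f := by
  rw [moriP_eq_prod_attachProb]
  exact prod_nonneg fun t ht => attachProb_nonneg hβ (by grind) _ _

lemma moriP_snoc (hN : 1 ≤ N) (β : ℝ) (f : ParentSeq N) (i : Icc 1 N) :
    moriP β (f.snoc i) = moriP β f * attachProb β (pval f) N i := by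
  simp only [moriP_eq_prod_attachProb, ParentSeq.pval_snoc]
  rw [prod_Icc_succ_top (by lia), Nat.add_sub_cancel, Function.update_self,
    apply_update_of_dependsOn (dependsOn_attachProb β N i) (by simp)]
  congr 1
  refine prod_congr rfl fun t ht => ?_
  rw [Function.update_of_ne (by grind),
    apply_update_of_dependsOn (dependsOn_attachProb β (t - 1) _) (by grind)]

end Attachment

section Expectation

variable {N s t : ℕ} {β : ℝ}

lemma moriE_mono (hβ : 0 < β) {X Y : ParentSeq N → ℝ} (h : ∀ f, X f ≤ Y f) :
    moriE N β X ≤ moriE N β Y :=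
  sum_le_sum fun f _ => mul_le_mul_of_nonneg_left (h f) (moriP_nonneg hβ f)

lemma moriE_nonneg (hβ : 0 < β) {X : ParentSeq N → ℝ} (h : ∀ f, 0 ≤ X f) : 0 ≤ moriE N β X :=
  sum_nonneg fun f _ => mul_nonneg (moriP_nonneg hβ f) (h f)

lemma moriE_add (X Y : ParentSeq N → ℝ) :
    moriE N β (fun f => X f + Y f) = moriE N β X + moriE N β Y := by
  simp only [moriE, mul_add, sum_add_distrib]

lemma moriE_const_mul (c : ℝ) (X : ParentSeq N → ℝ) :
    moriE N β (fun f => c * X f) = c * moriE N β X := by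
  simp only [moriE, mul_sum, mul_left_comm]

lemma moriE_sum {κ : Type*} (s : Finset κ) (X : κ → ParentSeq N → ℝ) :
    moriE N β (fun f => ∑ k ∈ s, X k f) = ∑ k ∈ s, moriE N β (X k) := by
  simp only [moriE, mul_sum]
  exact sum_comm

lemma moriE_succ (hN : 1 ≤ N) (β : ℝ) (X : (ℕ → ℕ) → ℝ) :
    moriE (N + 1) β (fun f => X (pval f)) =
      moriE N β fun f => attachE β (pval f) N fun i => X (Function.update (pval f) (N + 1) i) := by
  rw [moriE, ← (ParentSeq.snocEquiv hN).sum_comp, Fintype.sum_prod_type]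
  refine sum_congr rfl fun f _ => ?_
  simp only [attachE, mul_sum]
  rw [← sum_coe_sort (Icc 1 N)]
  refine sum_congr rfl fun i _ => ?_
  change moriP β (f.snoc i) * X (pval (f.snoc i)) = _
  rw [moriP_snoc hN, ParentSeq.pval_snoc, mul_assoc]

lemma moriE_eq_of_dependsOn (hβ : 0 < β) (hs : 1 ≤ s) (hst : s ≤ t) {X : (ℕ → ℕ) → ℝ}
    (hX : DependsOn X (Set.Iic s)) :
    moriE t β (fun f => X (pval f)) = moriE s β fun f => X (pval f) := by
  induction t, hst using Nat.le_induction with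
  | base => rfl
  | succ t hst ih =>
    have ht : t + 1 ∉ Set.Iic s := by grind
    simp only [← ih, moriE_succ (hs.trans hst), apply_update_of_dependsOn hX ht,
      attachE_const hβ (hs.trans hst) (isParentFun_pval _)]

lemma moriE_one (X : (ℕ → ℕ) → ℝ) : moriE 1 β (fun f => X (pval f)) = X 0 := by
  have h0 : pval (default : ParentSeq 1) = 0 := funext fun j => pval_of_notMem _ (by simp)
  simp [moriE, moriP_eq_prod_attachProb, h0]

lemma moriE_const (hβ : 0 < β) (hN : 1 ≤ N) (c : ℝ) : moriE N β (fun _ => c) = c := by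
  rw [moriE_eq_of_dependsOn (X := fun _ => c) hβ le_rfl hN (dependsOn_const c |>.mono (by simp))]
  exact moriE_one fun _ => c

end Expectation

/-! ### Weights of blocks -/

section BlockWeights

variable {m t : ℕ} {β : ℝ} {g : ℕ → ℕ}

lemma blk_mono (m : ℕ) : Monotone (blk m) := fun _ _ h =>
  Nat.add_le_add_right (Nat.div_le_div_right (Nat.sub_le_sub_right h 1)) 1

lemma card_filter_blk_le (hm : 1 ≤ m) (t k : ℕ) : #{i ∈ Icc 1 t | blk m i = k} ≤ m := by
  have hsub : {i ∈ Icc 1 t | blk m i = k} ⊆ Ioc ((k - 1) * m) ((k - 1) * m + m) := by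
    intro i hi
    obtain ⟨hi, rfl⟩ := mem_filter.1 hi
    have := Nat.div_add_mod' (i - 1) m
    have := Nat.mod_lt (i - 1) hm
    rw [blk, Nat.add_sub_cancel]
    grind
  simpa using card_le_card hsub

lemma le_add_of_blk_eq (hm : 1 ≤ m) {r : ℕ} (h : blk m (r + 1) = blk m t) : t ≤ r + m := by
  have hdiv : r / m = (t - 1) / m := Nat.add_right_cancel h
  have := Nat.div_mul_le_self r m
  have := Nat.lt_div_mul_add (a := t - 1) hm
  grind

/-- The real-valued indicator of the event that `v_i` belongs to `u_k`. -/
def inBlk (m k i : ℕ) : ℝ := if blk m i = k then 1 else 0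

lemma inBlk_nonneg (m k i : ℕ) : 0 ≤ inBlk m k i := by
  unfold inBlk
  positivity

lemma inBlk_self (m i : ℕ) : inBlk m (blk m i) i = 1 := if_pos rfl

/-- The number of edges of the tree on `v₁, …, v_t` that point into `u_k`. -/
def blockIndeg (m : ℕ) (g : ℕ → ℕ) (t k : ℕ) : ℕ := #{j ∈ Icc 2 t | blk m (g j) = k}

/-- An upper bound for the total weight `∑ (d_t(v_i) + β)` over the vertices `v_i`, `i ≤ t`,
of `u_k`; the two agree once `u_k` is complete, unless `k = 1`. -/
noncomputable def blockWeight (m : ℕ) (β : ℝ) (g : ℕ → ℕ) (t k : ℕ) : ℝ :=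
  blockIndeg m g t k + m * (1 + β)

/-- An upper bound for the weight of a block that is not older than the newest vertex. -/
noncomputable def freshWeight (m : ℕ) (β : ℝ) : ℝ := m * (2 + β)

lemma freshWeight_nonneg (m : ℕ) (hβ : 0 ≤ β) : 0 ≤ freshWeight m β := by
  unfold freshWeight
  positivity

lemma le_blockWeight (hβ : 0 ≤ β) (g : ℕ → ℕ) (t k : ℕ) :
    (blockIndeg m g t k + m : ℝ) ≤ blockWeight m β g t k := by
  have : (0 : ℝ) ≤ m * β := by positivity
  unfold blockWeight
  linarith

lemma blockWeight_nonneg (hβ : 0 ≤ β) (g : ℕ → ℕ) (t k : ℕ) : 0 ≤ blockWeight m β g t k :=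
  le_trans (by positivity) (le_blockWeight hβ g t k)

lemma dependsOn_blockWeight (m : ℕ) (β : ℝ) (t k : ℕ) :
    DependsOn (fun g => blockWeight m β g t k) (Set.Iic t) := fun g g' h => by
  simp only [blockWeight, blockIndeg]
  rw [filter_congr fun j hj => by rw [h j (mem_Icc.1 hj).2]]

lemma blockWeight_succ (ht : 1 ≤ t) (k : ℕ) :
    blockWeight m β g (t + 1) k = blockWeight m β g t k + inBlk m k (g (t + 1)) := by
  simp only [blockWeight, blockIndeg, inBlk, natCast_card_filter]
  rw [sum_Icc_succ_top (by lia)]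
  ring

lemma blockWeight_update (ht : 1 ≤ t) (i k : ℕ) :
    blockWeight m β (Function.update g (t + 1) i) (t + 1) k =
      blockWeight m β g t k + inBlk m k i := by
  rw [blockWeight_succ ht, Function.update_self,
    apply_update_of_dependsOn (dependsOn_blockWeight m β t k) (by simp)]

lemma blockWeight_le_freshWeight (hm : 1 ≤ m) (hg : IsParentFun t g) {k : ℕ}
    (hk : blk m t ≤ k) : blockWeight m β g t k ≤ freshWeight m β := by
  have hsub : {j ∈ Icc 2 t | blk m (g j) = k} ⊆ {j ∈ Icc 1 t | blk m j = k} := fun j hj => by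
    obtain ⟨hj, hgj⟩ := mem_filter.1 hj
    have h₁ : blk m (g j) ≤ blk m j := blk_mono m (by grind [hg j hj])
    have h₂ : blk m j ≤ blk m t := blk_mono m (by grind)
    grind
  have hcard : (blockIndeg m g t k : ℝ) ≤ m :=
    Nat.cast_le.2 ((card_le_card hsub).trans (card_filter_blk_le hm t k))
  unfold blockWeight freshWeight
  linarith

lemma blockWeight_le_two_mul (hm : 1 ≤ m) (hβ : 0 ≤ β) (g : ℕ → ℕ) {r : ℕ}
    (h : blk m (r + 1) = blk m t) (k : ℕ) :
    blockWeight m β g t k ≤ 2 * blockWeight m β g r k := by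
  have hsub : {j ∈ Icc 2 t | blk m (g j) = k} ⊆
      {j ∈ Icc 2 r | blk m (g j) = k} ∪ Ioc r (r + m) := by
    grind [le_add_of_blk_eq hm h]
  have hcard : (blockIndeg m g t k : ℝ) ≤ blockIndeg m g r k + m := by
    have := (card_le_card hsub).trans (card_union_le _ _)
    rw [Nat.card_Ioc, Nat.add_sub_cancel_left] at this
    exact_mod_cast this
  have := le_blockWeight (m := m) hβ g r k
  unfold blockWeight at *
  linarith

lemma sum_treeDeg_filter_blk_le (m : ℕ) (g : ℕ → ℕ) (t k : ℕ) :
    ∑ i ∈ Icc 1 t with blk m i = k, treeDeg g t i ≤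
      blockIndeg m g t k + #{i ∈ Icc 1 t | blk m i = k} := by
  simp only [treeDeg]
  rw [sum_add_distrib, sum_card_fiberwise_eq_card_filter, ← card_filter]
  exact add_le_add (card_le_card fun j => by grind) (card_le_card (filter_subset _ _))

lemma attachE_inBlk_le (hm : 1 ≤ m) (hβ : 0 < β) (ht : 1 ≤ t) (g : ℕ → ℕ) (k : ℕ) :
    attachE β g t (inBlk m k) ≤ blockWeight m β g t k / totalWeight β t := by
  simp only [attachE, inBlk, attachProb, mul_ite, mul_one, mul_zero]
  rw [← sum_filter, ← sum_div]
  refine div_le_div_of_nonneg_right ?_ (totalWeight_pos hβ ht).le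
  have hcard : (#{i ∈ Icc 1 t | blk m i = k} : ℝ) ≤ m := Nat.cast_le.2 (card_filter_blk_le hm t k)
  calc ∑ i ∈ Icc 1 t with blk m i = k, ((treeDeg g t i : ℝ) + β)
      ≤ blockIndeg m g t k + #{i ∈ Icc 1 t | blk m i = k} + #{i ∈ Icc 1 t | blk m i = k} * β := by
        rw [sum_add_distrib, sum_const, nsmul_eq_mul, ← Nat.cast_sum, ← Nat.cast_add]
        gcongr
        exact sum_treeDeg_filter_blk_le m g t k
    _ ≤ blockIndeg m g t k + m + m * β := by gcongr
    _ = blockWeight m β g t k := by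
        unfold blockWeight
        ring

lemma attachProb_le (hm : 1 ≤ m) (hβ : 0 < β) (ht : 1 ≤ t) (g : ℕ → ℕ) {i : ℕ}
    (hi : i ∈ Icc 1 t) :
    attachProb β g t i ≤ blockWeight m β g t (blk m i) / totalWeight β t := by
  refine le_trans ?_ (attachE_inBlk_le hm hβ ht g (blk m i))
  have := single_le_sum (f := fun j => attachProb β g t j * inBlk m (blk m i) j)
    (fun j _ => mul_nonneg (attachProb_nonneg hβ ht g j) (inBlk_nonneg _ _ _)) hi
  rwa [inBlk_self, mul_one] at this

end BlockWeights

section SecondMoment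

variable {m t : ℕ} {β : ℝ} {g : ℕ → ℕ}

lemma attachE_add_sum_inBlk_le (hm : 1 ≤ m) (hβ : 0 < β) (ht : 1 ≤ t) (hg : IsParentFun t g)
    {κ : Type*} (s : Finset κ) (c : ℝ) {d : κ → ℝ} (hd : ∀ x ∈ s, 0 ≤ d x) (k : κ → ℕ) :
    attachE β g t (fun i => c + ∑ x ∈ s, d x * inBlk m (k x) i) ≤
      c + ∑ x ∈ s, d x * (blockWeight m β g t (k x) / totalWeight β t) := by
  rw [attachE_add, attachE_const hβ ht hg, attachE_sum]
  gcongr with x hx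
  rw [attachE_const_mul]
  exact mul_le_mul_of_nonneg_left (attachE_inBlk_le hm hβ ht g (k x)) (hd x hx)

/-- A second moment of the block weights, with a block counted once for each of its vertices.
A weight `w` of total `D` grows to `w + 1` with probability `w / D`, so the rising factorial
`w * (w + 1)` grows on average by the exact factor `1 + 2 / D`. -/
noncomputable def weightMoment (m : ℕ) (β : ℝ) (g : ℕ → ℕ) (t : ℕ) : ℝ :=
  ∑ j ∈ Icc 1 t, blockWeight m β g t (blk m j) * (blockWeight m β g t (blk m j) + 1)

/-- An upper bound for `w * (w + 1)`, where `w` is the weight of a block that is not older than the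
newest vertex. -/
noncomputable def freshMoment (m : ℕ) (β : ℝ) : ℝ := freshWeight m β * (freshWeight m β + 1)

lemma freshMoment_nonneg (m : ℕ) (hβ : 0 ≤ β) : 0 ≤ freshMoment m β := by
  have := freshWeight_nonneg m hβ
  unfold freshMoment
  positivity

lemma blockWeight_mul_add_one_le (hm : 1 ≤ m) (hβ : 0 ≤ β) (hg : IsParentFun t g) {k : ℕ}
    (hk : blk m t ≤ k) :
    blockWeight m β g t k * (blockWeight m β g t k + 1) ≤ freshMoment m β := by
  have hW := blockWeight_nonneg (m := m) hβ g t k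
  have hle := blockWeight_le_freshWeight (β := β) hm hg hk
  exact mul_le_mul hle (by gcongr) (by positivity) (hW.trans hle)

lemma weightMoment_update_le (hm : 1 ≤ m) (hβ : 0 ≤ β) (ht : 1 ≤ t) (hg : IsParentFun t g)
    {i : ℕ} (hi : i ∈ Icc 1 t) :
    weightMoment m β (Function.update g (t + 1) i) (t + 1) ≤
      weightMoment m β g t + freshMoment m β +
        ∑ j ∈ Icc 1 t, 2 * (blockWeight m β g t (blk m j) + 1) * inBlk m (blk m j) i := by
  have hnew := blockWeight_mul_add_one_le hm hβ (hg.update hi) (le_refl (blk m (t + 1)))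
  have hsq (k : ℕ) : inBlk m k i * inBlk m k i = inBlk m k i := by
    unfold inBlk
    split_ifs <;> simp
  rw [weightMoment, sum_Icc_succ_top (by lia), weightMoment, add_right_comm, ← sum_add_distrib]
  refine add_le_add (sum_le_sum fun j _ => le_of_eq ?_) hnew
  rw [blockWeight_update ht]
  linear_combination hsq (blk m j)

lemma attachE_weightMoment_le (hm : 1 ≤ m) (hβ : 0 < β) (ht : 1 ≤ t) (hg : IsParentFun t g) :
    attachE β g t (fun i => weightMoment m β (Function.update g (t + 1) i) (t + 1)) ≤
      (1 + 2 / totalWeight β t) * weightMoment m β g t + freshMoment m β := by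
  have hd (j) : 0 ≤ 2 * (blockWeight m β g t (blk m j) + 1) := by
    have := blockWeight_nonneg (m := m) hβ.le g t (blk m j)
    positivity
  refine (attachE_mono hβ ht g fun i hi => weightMoment_update_le hm hβ.le ht hg hi).trans <|
    (attachE_add_sum_inBlk_le hm hβ ht hg _ _ (fun j _ => hd j) _).trans_eq ?_
  rw [add_right_comm, weightMoment, mul_sum, ← sum_add_distrib]
  congr 1
  refine sum_congr rfl fun j _ => ?_
  ring

lemma totalWeight_succ (β : ℝ) (t : ℕ) : totalWeight β (t + 1) = totalWeight β t + (2 + β) := by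
  unfold totalWeight
  push_cast
  ring

lemma moriE_weightMoment_le (hm : 1 ≤ m) (hβ : 0 < β) (ht : 1 ≤ t) :
    moriE t β (fun f => weightMoment m β (pval f) t) ≤
      freshMoment m β / β * totalWeight β t := by
  induction t, ht using Nat.le_induction with
  | base =>
    have hD : totalWeight β 1 = β := by
      unfold totalWeight
      push_cast
      ring
    rw [hD, div_mul_cancel₀ _ hβ.ne', moriE_one fun g => weightMoment m β g 1, weightMoment,
      Icc_self, sum_singleton]
    exact blockWeight_mul_add_one_le hm hβ.le (fun j hj => by grind) le_rfl
  | succ t ht ih =>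
    have hD := totalWeight_pos hβ ht
    rw [moriE_succ ht β fun g => weightMoment m β g (t + 1)]
    calc _ ≤ moriE t β fun f =>
            (1 + 2 / totalWeight β t) * weightMoment m β (pval f) t + freshMoment m β :=
          moriE_mono hβ fun f => attachE_weightMoment_le hm hβ ht (isParentFun_pval f)
      _ = (1 + 2 / totalWeight β t) * moriE t β (fun f => weightMoment m β (pval f) t) +
          freshMoment m β := by rw [moriE_add, moriE_const_mul, moriE_const hβ ht]
      _ ≤ (1 + 2 / totalWeight β t) * (freshMoment m β / β * totalWeight β t) +
          freshMoment m β := by gcongr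
      _ = freshMoment m β / β * totalWeight β (t + 1) := by
          rw [totalWeight_succ]
          field_simp
          ring

lemma attachE_blockWeight_le (hm : 1 ≤ m) (hβ : 0 < β) (ht : 1 ≤ t) (g : ℕ → ℕ) :
    attachE β g t (fun i => blockWeight m β g t (blk m i)) ≤
      (1 / totalWeight β t) * weightMoment m β g t := by
  have hD := totalWeight_pos hβ ht
  rw [weightMoment, mul_sum]
  refine sum_le_sum fun i hi => ?_
  have hW := blockWeight_nonneg (m := m) hβ.le g t (blk m i)
  calc attachProb β g t i * blockWeight m β g t (blk m i)
      ≤ blockWeight m β g t (blk m i) / totalWeight β t * (blockWeight m β g t (blk m i) + 1) := by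
        gcongr
        · exact attachProb_le hm hβ ht g hi
        · linarith
    _ = 1 / totalWeight β t *
          (blockWeight m β g t (blk m i) * (blockWeight m β g t (blk m i) + 1)) := by ring

lemma moriE_blockWeight_parent_le (hm : 1 ≤ m) (hβ : 0 < β) {r : ℕ} (hr : 1 ≤ r) (hrt : r + 1 ≤ t)
    (h : blk m (r + 1) = blk m t) :
    moriE t β (fun f => blockWeight m β (pval f) t (blk m (pval f (r + 1)))) ≤
      2 * (freshMoment m β / β) := by
  have hD := totalWeight_pos hβ hr
  have hdep : DependsOn (fun g => blockWeight m β g r (blk m (g (r + 1)))) (Set.Iic (r + 1)) :=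
    fun g g' hgg' => by
      simp only [hgg' (r + 1) (by simp)]
      exact dependsOn_blockWeight m β r _ fun j hj => hgg' j (by grind)
  calc _ ≤ moriE t β fun f => 2 * blockWeight m β (pval f) r (blk m (pval f (r + 1))) :=
        moriE_mono hβ fun f => blockWeight_le_two_mul hm hβ.le _ h _
    _ = 2 * moriE r β fun f => attachE β (pval f) r fun i =>
          blockWeight m β (pval f) r (blk m i) := by
        rw [moriE_const_mul, moriE_eq_of_dependsOn hβ (by lia) hrt hdep,
          moriE_succ hr β fun g => blockWeight m β g r (blk m (g (r + 1)))]
        simp only [Function.update_self,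
          apply_update_of_dependsOn (dependsOn_blockWeight m β r _) (k := r + 1) (by simp)]
    _ ≤ 2 * (1 / totalWeight β r * (freshMoment m β / β * totalWeight β r)) := by
        gcongr
        refine (moriE_mono hβ fun f => attachE_blockWeight_le hm hβ hr (pval f)).trans ?_
        rw [moriE_const_mul]
        gcongr
        exact moriE_weightMoment_le hm hβ hr
    _ = 2 * (freshMoment m β / β) := by field_simp

end SecondMoment

/-! ### Growth of the potential -/

section Growth

variable {α : ℝ}

lemma one_add_div_mul_sub_one_rpow_le (hα₀ : 0 ≤ α) (hα₁ : α ≤ 1) {y : ℝ} (hy : 1 < y) :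
    (1 + α / (y - α)) * (y - 1) ^ α ≤ y ^ α := by
  have hinv : 1 / y ≤ 1 := (div_le_one (by linarith)).2 hy.le
  have hbernoulli : (1 + -(1 / y)) ^ α ≤ 1 + α * -(1 / y) :=
    rpow_one_add_le_one_add_mul_self (by linarith) hα₀ hα₁
  have hfactor : y - 1 = y * (1 + -(1 / y)) := by
    field_simp
    ring
  have hyα : 0 < y - α := by linarith
  rw [hfactor, Real.mul_rpow (by linarith) (by linarith)]
  calc _ ≤ (1 + α / (y - α)) * (y ^ α * (1 + α * -(1 / y))) := by gcongr
    _ = y ^ α := by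
        field_simp
        ring

lemma le_mul_rpow_of_le_one_add_div_mul (hα₀ : 0 ≤ α) (hα₁ : α < 1 / 2) {y : ℕ → ℝ}
    (hy₁ : 0 ≤ y 1) (hy : ∀ t : ℕ, 1 ≤ t → y (t + 1) ≤ (1 + α / (t - 2 * α)) * y t) {t : ℕ}
    (ht : 1 ≤ t) : y t ≤ (1 + α / (1 - 2 * α)) * y 1 / (1 - α) ^ α * (t : ℝ) ^ α := by
  set A := (1 + α / (1 - 2 * α)) * y 1 / (1 - α) ^ α with hA
  have hroot : 0 < (1 - α) ^ α := Real.rpow_pos_of_pos (by linarith) α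
  have hratio : 0 ≤ α / (1 - 2 * α) := div_nonneg hα₀ (by linarith)
  have hA₀ : 0 ≤ A := by positivity
  -- The shift by `1 + α` turns the recursion into Bernoulli's inequality.
  have hshift : ∀ t : ℕ, 2 ≤ t → y t ≤ A * (t - 1 - α) ^ α := by
    intro t ht
    induction t, ht using Nat.le_induction with
    | base =>
      have h2 := hy 1 le_rfl
      rw [Nat.cast_one] at h2
      rwa [Nat.cast_ofNat, show (2 : ℝ) - 1 - α = 1 - α by ring, hA, div_mul_cancel₀ _ hroot.ne']
    | succ t ht ih =>
      have htR : (2 : ℝ) ≤ t := Nat.ofNat_le_cast.2 ht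
      have hrat : 0 ≤ α / (t - 2 * α) := div_nonneg hα₀ (by linarith)
      calc y (t + 1) ≤ (1 + α / (t - 2 * α)) * (A * (t - 1 - α) ^ α) :=
            (hy t (by lia)).trans (by gcongr)
        _ = A * ((1 + α / (t - α - α)) * (t - α - 1) ^ α) := by ring_nf
        _ ≤ A * (t - α) ^ α := by
            gcongr
            exact one_add_div_mul_sub_one_rpow_le hα₀ (by linarith) (by linarith)
        _ = A * ((t + 1 : ℕ) - 1 - α) ^ α := by
            push_cast
            ring_nf
  rcases ht.eq_or_lt with rfl | ht
  · have hroot₁ : (1 - α) ^ α ≤ 1 := Real.rpow_le_one (by linarith) (by linarith) hα₀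
    rw [Nat.cast_one, Real.one_rpow, mul_one, hA, le_div_iff₀ hroot]
    nlinarith [mul_nonneg hratio hy₁]
  · have htR : (2 : ℝ) ≤ t := Nat.ofNat_le_cast.2 ht
    refine (hshift t ht).trans (mul_le_mul_of_nonneg_left ?_ hA₀)
    exact Real.rpow_le_rpow (by linarith) (by linarith) hα₀

end Growth

section Potential

variable {m t : ℕ} {β : ℝ} {g : ℕ → ℕ}

/-- The sum over all loops of the current weight of the block carrying the loop. -/
noncomputable def loopWeight (m : ℕ) (β : ℝ) (g : ℕ → ℕ) (t : ℕ) : ℝ :=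
  ∑ s ∈ Icc 2 t, inBlk m (blk m s) (g s) * blockWeight m β g t (blk m s)

/-- The number of pairs of edges with the same source block and the same target block. -/
def parallelPairs (m : ℕ) (g : ℕ → ℕ) (t : ℕ) : ℝ :=
  ∑ r ∈ Icc 2 t, ∑ s ∈ Ico 2 r, inBlk m (blk m r) s * inBlk m (blk m (g r)) (g s)

/-- A quantity that dominates half the number of degenerate pairs (see
`degeneratePairs_le_potential`) and whose conditional expectation grows by the factor
`1 + 1 / totalWeight β t`, up to an error term. -/
noncomputable def potential (m : ℕ) (β : ℝ) (g : ℕ → ℕ) (t : ℕ) : ℝ :=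
  loopWeight m β g t + parallelPairs m g t

lemma loopWeight_update_le (hm : 1 ≤ m) (ht : 1 ≤ t) (hg : IsParentFun t g) {i : ℕ}
    (hi : i ∈ Icc 1 t) :
    loopWeight m β (Function.update g (t + 1) i) (t + 1) ≤
      loopWeight m β g t + ∑ s ∈ Icc 2 t, inBlk m (blk m s) (g s) * inBlk m (blk m s) i +
        freshWeight m β * inBlk m (blk m (t + 1)) i := by
  have hnew := blockWeight_le_freshWeight (β := β) hm (hg.update hi) (le_refl (blk m (t + 1)))
  rw [loopWeight, sum_Icc_succ_top (by lia), loopWeight, ← sum_add_distrib, Function.update_self,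
    mul_comm (inBlk _ _ i)]
  refine add_le_add (sum_le_sum fun s hs => le_of_eq ?_)
    (mul_le_mul_of_nonneg_right hnew (inBlk_nonneg _ _ _))
  rw [Function.update_of_ne (by grind), blockWeight_update ht, mul_add]

lemma attachE_loopWeight_le (hm : 1 ≤ m) (hβ : 0 < β) (ht : 1 ≤ t) (hg : IsParentFun t g) :
    attachE β g t (fun i => loopWeight m β (Function.update g (t + 1) i) (t + 1)) ≤
      (1 + 1 / totalWeight β t) * loopWeight m β g t +
        1 / totalWeight β t * freshWeight m β ^ 2 := by
  have hD := totalWeight_pos hβ ht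
  have hfresh : attachE β g t (inBlk m (blk m (t + 1))) ≤ freshWeight m β / totalWeight β t :=
    (attachE_inBlk_le hm hβ ht g _).trans <| by
      gcongr
      exact blockWeight_le_freshWeight hm hg (blk_mono m t.le_succ)
  have hfresh₀ := freshWeight_nonneg m hβ.le
  calc _ ≤ attachE β g t fun i => loopWeight m β g t +
          ∑ s ∈ Icc 2 t, inBlk m (blk m s) (g s) * inBlk m (blk m s) i +
            freshWeight m β * inBlk m (blk m (t + 1)) i :=
        attachE_mono hβ ht g fun i hi => loopWeight_update_le hm ht hg hi
    _ ≤ loopWeight m β g t + ∑ s ∈ Icc 2 t, inBlk m (blk m s) (g s) *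
          (blockWeight m β g t (blk m s) / totalWeight β t) +
            freshWeight m β * (freshWeight m β / totalWeight β t) := by
        rw [attachE_add, attachE_const_mul]
        gcongr
        exact attachE_add_sum_inBlk_le hm hβ ht hg _ _ (fun _ _ => inBlk_nonneg _ _ _) _
    _ = _ := by
        simp only [loopWeight, ← mul_div_assoc, ← sum_div]
        ring

lemma parallelPairs_nonneg (m : ℕ) (g : ℕ → ℕ) (t : ℕ) : 0 ≤ parallelPairs m g t :=
  sum_nonneg fun _ _ => sum_nonneg fun _ _ => mul_nonneg (inBlk_nonneg _ _ _) (inBlk_nonneg _ _ _)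

lemma inBlk_comm (m i j : ℕ) : inBlk m (blk m i) j = inBlk m (blk m j) i := by
  simp only [inBlk, eq_comm]

lemma parallelPairs_update (m : ℕ) (g : ℕ → ℕ) (ht : 1 ≤ t) (i : ℕ) :
    parallelPairs m (Function.update g (t + 1) i) (t + 1) = parallelPairs m g t +
      ∑ s ∈ Icc 2 t, inBlk m (blk m (t + 1)) s * inBlk m (blk m (g s)) i := by
  rw [parallelPairs, sum_Icc_succ_top (by lia), parallelPairs, Ico_add_one_right_eq_Icc]
  congr 1
  · refine sum_congr rfl fun r hr => sum_congr rfl fun s hs => ?_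
    rw [Function.update_of_ne (by grind), Function.update_of_ne (by grind)]
  · refine sum_congr rfl fun s hs => ?_
    rw [Function.update_self, Function.update_of_ne (by grind), inBlk_comm m i]

lemma attachE_potential_le (hm : 1 ≤ m) (hβ : 0 < β) (ht : 1 ≤ t) (hg : IsParentFun t g) :
    attachE β g t (fun i => potential m β (Function.update g (t + 1) i) (t + 1)) ≤
      (1 + 1 / totalWeight β t) * potential m β g t + 1 / totalWeight β t * (freshWeight m β ^ 2 +
        ∑ s ∈ Icc 2 t, inBlk m (blk m (t + 1)) s * blockWeight m β g t (blk m (g s))) := by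
  have hloop := attachE_loopWeight_le hm hβ ht hg
  have hparallel := attachE_add_sum_inBlk_le hm hβ ht hg (Icc 2 t) (parallelPairs m g t)
    (fun s _ => inBlk_nonneg m (blk m (t + 1)) s) fun s => blk m (g s)
  have hdrop : 0 ≤ 1 / totalWeight β t * parallelPairs m g t :=
    mul_nonneg (one_div_nonneg.2 (totalWeight_pos hβ ht).le) (parallelPairs_nonneg m g t)
  simp only [← mul_div_assoc, ← sum_div, ← parallelPairs_update m g ht] at hparallel
  simp only [potential]
  rw [attachE_add]
  linear_combination hloop + hparallel + hdrop

lemma moriE_sum_blockWeight_parent_le (hm : 1 ≤ m) (hβ : 0 < β) :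
    moriE t β (fun f => ∑ s ∈ Icc 2 t,
      inBlk m (blk m (t + 1)) s * blockWeight m β (pval f) t (blk m (pval f s))) ≤
      m * (2 * (freshMoment m β / β)) := by
  have hC : 0 ≤ 2 * (freshMoment m β / β) := by
    have := freshMoment_nonneg m hβ.le
    positivity
  have hsub : {s ∈ Icc 2 t | blk m s = blk m (t + 1)} ⊆ {s ∈ Icc 1 t | blk m s = blk m (t + 1)} :=
    filter_subset_filter _ (Icc_subset_Icc_left one_le_two)
  rw [moriE_sum]
  calc _ ≤ ∑ s ∈ Icc 2 t, inBlk m (blk m (t + 1)) s * (2 * (freshMoment m β / β)) := by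
        refine sum_le_sum fun s hs => ?_
        obtain ⟨hs₂, hst⟩ := mem_Icc.1 hs
        rw [moriE_const_mul]
        by_cases hblk : blk m s = blk m (t + 1)
        · have hblk' : blk m s = blk m t :=
            (blk_mono m hst).antisymm (hblk ▸ blk_mono m t.le_succ)
          obtain ⟨r, rfl⟩ := Nat.exists_eq_add_of_le' (one_le_two.trans hs₂)
          exact mul_le_mul_of_nonneg_left
            (moriE_blockWeight_parent_le hm hβ (by lia) hst hblk') (inBlk_nonneg _ _ _)
        · simp [inBlk, hblk]
    _ = #{s ∈ Icc 2 t | blk m s = blk m (t + 1)} * (2 * (freshMoment m β / β)) := by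
        simp only [← sum_mul, inBlk, natCast_card_filter]
    _ ≤ m * (2 * (freshMoment m β / β)) := by
        gcongr
        exact (card_le_card hsub).trans (card_filter_blk_le hm t _)

/-- The constant `C` in the growth estimate `E Φ_{t+1} ≤ (1 + 1 / D) E Φ_t + C / D`. -/
noncomputable def potentialGain (m : ℕ) (β : ℝ) : ℝ :=
  freshWeight m β ^ 2 + m * (2 * (freshMoment m β / β))

lemma potentialGain_pos (hm : 1 ≤ m) (hβ : 0 ≤ β) : 0 < potentialGain m β := by
  have hfresh : 0 < freshWeight m β := mul_pos (Nat.cast_pos.2 hm) (by linarith)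
  have hmoment := freshMoment_nonneg m hβ
  unfold potentialGain
  positivity

lemma moriE_potential_succ_le (hm : 1 ≤ m) (hβ : 0 < β) (ht : 1 ≤ t) :
    moriE (t + 1) β (fun f => potential m β (pval f) (t + 1)) ≤
      (1 + 1 / totalWeight β t) * moriE t β (fun f => potential m β (pval f) t) +
        1 / totalWeight β t * potentialGain m β := by
  have hD := totalWeight_pos hβ ht
  rw [moriE_succ ht β fun g => potential m β g (t + 1)]
  refine (moriE_mono hβ fun f => attachE_potential_le hm hβ ht (isParentFun_pval f)).trans ?_
  rw [moriE_add, moriE_const_mul, moriE_const_mul, moriE_add, moriE_const hβ ht, potentialGain]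
  gcongr
  exact moriE_sum_blockWeight_parent_le hm hβ

lemma exists_moriE_potential_le (hm : 1 ≤ m) (hβ : 0 < β) :
    ∃ A : ℝ, 0 < A ∧ ∀ t : ℕ, 1 ≤ t →
      moriE t β (fun f => potential m β (pval f) t) ≤ A * (t : ℝ) ^ (1 / (2 + β)) := by
  set α := 1 / (2 + β) with hα
  have hα₀ : 0 < α := by positivity
  have hα₁ : α < 1 / 2 := one_div_lt_one_div_of_lt two_pos (by linarith)
  have hgain := potentialGain_pos hm hβ.le
  set y : ℕ → ℝ := fun t => moriE t β (fun f => potential m β (pval f) t) + potentialGain m β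
  have hy₁ : y 1 = potentialGain m β := by
    simp [y, moriE_const hβ le_rfl, potential, loopWeight, parallelPairs]
  have hy (t : ℕ) (ht : 1 ≤ t) : y (t + 1) ≤ (1 + α / (t - 2 * α)) * y t := by
    have hD : α / (t - 2 * α) = 1 / totalWeight β t := by
      have := (totalWeight_pos hβ ht).ne'
      unfold totalWeight at *
      rw [hα]
      field_simp
    rw [hD]
    linear_combination moriE_potential_succ_le hm hβ ht
  have hratio : 0 < α / (1 - 2 * α) := div_pos hα₀ (by linarith)
  have hroot : 0 < (1 - α) ^ α := Real.rpow_pos_of_pos (by linarith) α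
  refine ⟨(1 + α / (1 - 2 * α)) * y 1 / (1 - α) ^ α, by rw [hy₁]; positivity, fun t ht => ?_⟩
  refine le_trans ?_ (le_mul_rpow_of_le_one_add_div_mul hα₀.le hα₁ (hy₁ ▸ hgain.le) hy ht)
  exact le_add_of_nonneg_right hgain.le

end Potential

/-! ### Degenerate pairs -/

section DegeneratePairs

variable {n m : ℕ} {β : ℝ}

lemma blk_mem_Icc {t : ℕ} (ht : t ∈ Icc 1 (n * m)) : blk m t ∈ Icc 1 n := by
  have hlt : (t - 1) / m < n := Nat.div_lt_of_lt_mul (by grind)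
  exact mem_Icc.2 ⟨Nat.le_add_left 1 _, hlt⟩

lemma blk_pval_mem_Icc (f : ParentSeq (n * m)) {t : ℕ} (ht : t ∈ Icc 2 (n * m)) :
    blk m (pval f t) ∈ Icc 1 n :=
  blk_mem_Icc (by grind [isParentFun_pval f t ht])

/-- The number of edges that are directed from a vertex of `u_a` to a vertex of `u_b`. -/
def arcMult (n m : ℕ) (f : ParentSeq (n * m)) (a b : ℕ) : ℕ :=
  #{t ∈ Icc 2 (n * m) | blk m t = a ∧ blk m (pval f t) = b}

lemma mult_comm (f : ParentSeq (n * m)) (a b : ℕ) : mult n m f a b = mult n m f b a := by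
  simp only [mult, or_comm]

lemma mult_self (f : ParentSeq (n * m)) (a : ℕ) : mult n m f a a = arcMult n m f a a := by
  simp only [mult, arcMult, or_self]

lemma mult_eq_add (f : ParentSeq (n * m)) {a b : ℕ} (h : b ≠ a) :
    mult n m f a b = arcMult n m f a b + arcMult n m f b a := by
  rw [mult, filter_or, card_union_of_disjoint (disjoint_filter.2 fun t _ => by grind)]
  rfl

lemma arcMult_eq_zero (f : ParentSeq (n * m)) {a b : ℕ} (h : a < b) : arcMult n m f a b = 0 := by
  refine card_eq_zero.2 (filter_eq_empty_iff.2 ?_)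
  rintro t ht ⟨rfl, rfl⟩
  exact h.not_ge (blk_mono m (by grind [isParentFun_pval f t ht]))

lemma degU_eq_sum_arcMult (f : ParentSeq (n * m)) (v : ℕ) :
    degU n m f v = ∑ u ∈ Icc 1 n, (arcMult n m f v u + arcMult n m f u v) := by
  rw [sum_add_distrib]
  simp only [degU, arcMult, ← filter_filter, and_comm (b := blk m (pval f _) = v)]
  refine congr_arg₂ (· + ·) (card_eq_sum_card_fiberwise fun t ht => ?_)
    (card_eq_sum_card_fiberwise fun t ht => ?_)
  · exact blk_pval_mem_Icc f (mem_filter.1 ht).1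
  · exact blk_mem_Icc (by grind)

lemma degU_eq_sum_mult (f : ParentSeq (n * m)) {v : ℕ} (hv : v ∈ Icc 1 n) :
    degU n m f v = ∑ u ∈ (Icc 1 n).erase v, mult n m f v u + 2 * mult n m f v v := by
  rw [degU_eq_sum_arcMult, ← sum_erase_add _ _ hv, mult_self, two_mul]
  congr 1
  exact sum_congr rfl fun u hu => (mult_eq_add f (ne_of_mem_erase hu)).symm

/-- The number of degenerate pairs of adjacent half-edges: two parallel edges, a loop and another
edge, or two half-edges of loops at the same vertex. The number of loops at `u_v` is
`mult n m f v v`. -/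
def degeneratePairs (n m : ℕ) (f : ParentSeq (n * m)) : ℕ :=
  ∑ v ∈ Icc 1 n, (∑ u ∈ (Icc 1 n).erase v, (mult n m f v u).choose 2 +
    2 * mult n m f v v * ∑ u ∈ (Icc 1 n).erase v, mult n m f v u + (2 * mult n m f v v).choose 2)

lemma sum_choose_degU_sub_sum_cherries (f : ParentSeq (n * m)) :
    (∑ i ∈ Icc 1 n, (Nat.choose (degU n m f i) 2 : ℝ)) -
      ∑ a ∈ Icc 1 n, ∑ b ∈ Ioc a n, ∑ c ∈ Ioc b n,
        ((mult n m f a b : ℝ) * (mult n m f a c : ℝ) + (mult n m f a b : ℝ) * (mult n m f b c : ℝ) +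
          (mult n m f a c : ℝ) * (mult n m f b c : ℝ)) = degeneratePairs n m f := by
  have hIoc : ∀ a ∈ Icc 1 n, Ioc a n = {b ∈ Icc 1 n | a < b} := fun a ha => by grind
  rw [sub_eq_iff_eq_add', ← Nat.cast_sum,
    sum_congr rfl fun v hv => by rw [degU_eq_sum_mult f hv],
    sum_choose_two_degree_eq (Icc 1 n) (mult_comm f), Nat.cast_add, Nat.cast_sum, degeneratePairs]
  congr 1
  refine sum_congr rfl fun a ha => ?_
  rw [hIoc a ha, Nat.cast_sum]
  refine sum_congr rfl fun b hb => ?_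
  rw [hIoc b (mem_filter.1 hb).1]
  push_cast
  rfl

lemma sum_sum_choose_arcMult (f : ParentSeq (n * m)) :
    (∑ v ∈ Icc 1 n, ∑ u ∈ Icc 1 n, (arcMult n m f v u).choose 2 : ℝ) =
      parallelPairs m (pval f) (n * m) := by
  have hmaps : ∀ t ∈ Icc 2 (n * m), (blk m t, blk m (pval f t)) ∈ Icc 1 n ×ˢ Icc 1 n :=
    fun t ht => mk_mem_product (blk_mem_Icc (by grind)) (blk_pval_mem_Icc f ht)
  have hIco : ∀ r ∈ Icc 2 (n * m), {s ∈ Icc 2 (n * m) | s < r} = Ico 2 r := fun r hr => by grind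
  have hfiber := (sum_choose_two_card_fiber hmaps).trans
    (sum_congr rfl fun r hr => by rw [hIco r hr])
  simp only [sum_product, Prod.mk.injEq] at hfiber
  simp only [arcMult, parallelPairs, inBlk, ite_mul, one_mul, zero_mul, ← ite_and]
  exact_mod_cast hfiber

lemma sum_choose_mult_le (f : ParentSeq (n * m)) :
    ∑ v ∈ Icc 1 n, ∑ u ∈ (Icc 1 n).erase v, (mult n m f v u).choose 2 ≤
      2 * ∑ v ∈ Icc 1 n, ∑ u ∈ Icc 1 n, (arcMult n m f v u).choose 2 := by
  have hsplit (v u : ℕ) (hu : u ∈ (Icc 1 n).erase v) : (mult n m f v u).choose 2 =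
      (arcMult n m f v u).choose 2 + (arcMult n m f u v).choose 2 := by
    rw [mult_eq_add f (ne_of_mem_erase hu), choose_two_add]
    rcases (ne_of_mem_erase hu).lt_or_gt with h | h <;> simp [arcMult_eq_zero f h]
  calc _ ≤ ∑ v ∈ Icc 1 n, ∑ u ∈ Icc 1 n,
          ((arcMult n m f v u).choose 2 + (arcMult n m f u v).choose 2) :=
        sum_le_sum fun v _ => (sum_congr rfl (hsplit v)).trans_le
          (sum_le_sum_of_subset (erase_subset _ _))
    _ = _ := by
        simp only [sum_add_distrib]
        rw [sum_comm (f := fun v u => (arcMult n m f u v).choose 2), two_mul]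

lemma sum_mult_self_mul_blockWeight (f : ParentSeq (n * m)) :
    ∑ v ∈ Icc 1 n, mult n m f v v * blockWeight m β (pval f) (n * m) v =
      loopWeight m β (pval f) (n * m) := by
  simp only [mult_self, arcMult, natCast_card_filter, sum_mul, loopWeight]
  rw [sum_comm]
  refine sum_congr rfl fun t ht => ?_
  rw [sum_eq_single_of_mem (blk m t) (blk_mem_Icc (by grind)) fun v _ hv => by simp [hv.symm]]
  simp only [inBlk, true_and]

lemma degU_le_blockWeight (hm : 1 ≤ m) (hβ : 0 ≤ β) (f : ParentSeq (n * m)) (v : ℕ) :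
    (degU n m f v : ℝ) ≤ blockWeight m β (pval f) (n * m) v := by
  have hcard : #{t ∈ Icc 2 (n * m) | blk m t = v} ≤ m :=
    (card_le_card (filter_subset_filter _ (Icc_subset_Icc_left one_le_two))).trans
      (card_filter_blk_le hm (n * m) v)
  calc (degU n m f v : ℝ) ≤ (blockIndeg m (pval f) (n * m) v + m : ℕ) :=
        Nat.cast_le.2 ((add_comm _ _).trans_le (Nat.add_le_add_left hcard _))
    _ ≤ _ := by
        rw [Nat.cast_add]
        exact le_blockWeight hβ _ _ _

lemma degeneratePairs_le_potential (hm : 1 ≤ m) (hβ : 0 ≤ β) (f : ParentSeq (n * m)) :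
    (degeneratePairs n m f : ℝ) ≤ 2 * potential m β (pval f) (n * m) := by
  have hloops (v : ℕ) (hv : v ∈ Icc 1 n) :
      2 * mult n m f v v * ∑ u ∈ (Icc 1 n).erase v, mult n m f v u + (2 * mult n m f v v).choose 2 ≤
        2 * mult n m f v v * degU n m f v := by
    rw [degU_eq_sum_mult f hv, mul_add]
    gcongr
    exact (Nat.choose_le_pow _ _).trans_eq (sq _)
  calc (degeneratePairs n m f : ℝ)
      ≤ (2 * ∑ v ∈ Icc 1 n, ∑ u ∈ Icc 1 n, (arcMult n m f v u).choose 2 +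
          ∑ v ∈ Icc 1 n, 2 * mult n m f v v * degU n m f v : ℕ) := by
        simp only [degeneratePairs, add_assoc]
        rw [sum_add_distrib]
        exact Nat.cast_le.2 (add_le_add (sum_choose_mult_le f) (sum_le_sum hloops))
    _ ≤ 2 * parallelPairs m (pval f) (n * m) +
          2 * ∑ v ∈ Icc 1 n, mult n m f v v * blockWeight m β (pval f) (n * m) v := by
        push_cast
        rw [sum_sum_choose_arcMult]
        simp only [mul_assoc, ← mul_sum]
        gcongr with v
        exact degU_le_blockWeight hm hβ f v
    _ = 2 * potential m β (pval f) (n * m) := by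
        rw [sum_mult_self_mul_blockWeight, potential]
        ring

end DegeneratePairs

/-- The expected number of degenerate pairs of adjacent half-edges of `G^n_{m,β}`, i.e. the
difference between `Σ_i binom(d(u_i),2)` and the number of non-degenerate pairs, is
nonnegative and is `O(n^{1/(2+β)})`. -/
theorem expected_degenerate_pairs (β : ℝ) (hβ : 0 < β) (m : ℕ) (hm : 1 ≤ m) :
    ∃ K : ℝ, 0 < K ∧ ∀ n : ℕ, 1 ≤ n →
      0 ≤ moriE (n * m) β
          (fun f => (∑ i ∈ Finset.Icc 1 n, (Nat.choose (degU n m f i) 2 : ℝ))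
            - ∑ a ∈ Finset.Icc 1 n, ∑ b ∈ Finset.Ioc a n, ∑ c ∈ Finset.Ioc b n,
                ((mult n m f a b : ℝ) * (mult n m f a c : ℝ)
                  + (mult n m f a b : ℝ) * (mult n m f b c : ℝ)
                  + (mult n m f a c : ℝ) * (mult n m f b c : ℝ))) ∧
      moriE (n * m) β
          (fun f => (∑ i ∈ Finset.Icc 1 n, (Nat.choose (degU n m f i) 2 : ℝ))
            - ∑ a ∈ Finset.Icc 1 n, ∑ b ∈ Finset.Ioc a n, ∑ c ∈ Finset.Ioc b n,
                ((mult n m f a b : ℝ) * (mult n m f a c : ℝ)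
                  + (mult n m f a b : ℝ) * (mult n m f b c : ℝ)
                  + (mult n m f a c : ℝ) * (mult n m f b c : ℝ)))
        ≤ K * (n : ℝ) ^ (1 / (2 + β)) := by
  obtain ⟨A, hA, hpotential⟩ := exists_moriE_potential_le hm hβ
  refine ⟨2 * (A * (m : ℝ) ^ (1 / (2 + β))), by positivity, fun n hn => ?_⟩
  simp only [sum_choose_degU_sub_sum_cherries]
  refine ⟨moriE_nonneg hβ fun f => Nat.cast_nonneg _, ?_⟩
  calc moriE (n * m) β (fun f => degeneratePairs n m f)
      ≤ moriE (n * m) β fun f => 2 * potential m β (pval f) (n * m) :=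
        moriE_mono hβ fun f => degeneratePairs_le_potential hm hβ.le f
    _ ≤ 2 * (A * ((n * m : ℕ) : ℝ) ^ (1 / (2 + β))) := by
        rw [moriE_const_mul]
        gcongr
        exact hpotential _ (Nat.mul_pos hn hm)
    _ = 2 * (A * (m : ℝ) ^ (1 / (2 + β))) * (n : ℝ) ^ (1 / (2 + β)) := by
        rw [Nat.cast_mul, Real.mul_rpow n.cast_nonneg m.cast_nonneg]
        ring
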